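/- arXiv:1505.00433 — 2 statements merged into one kernel-verified Lean document; each statement's English description precedes it below -/
import Mathlib

section
/- Suppose ψ and ψ' are two functions from the set of factors of ω to ℝ, each satisfying: it is strictly positive on every factor; its values on the two one-letter factors 0 and 1 sum to 1; and for every factor α it equals the sum of its values over the one-letter left extensions of α that are factors, and also equals the sum of its values over the one-letter right extensions of α that are factors. Then ψ(α) = ψ'(α) for every factor α of ω. -/
/-- One-sided Thue–Morse sequence: parity of the binary digit sum. -/
def tm (n : ℕ) : ℕ := (Nat.digits 2 n).sum % 2

/-- Two-sided Thue–Morse sequence `ω : ℤ → {0,1}`. -/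
def tmZ (n : ℤ) : ℕ := if 0 ≤ n then tm n.toNat else tm (-n - 1).toNat

/-- The block `ω_[m, m+k-1]` of the two-sided Thue–Morse sequence. -/
def tmBlock (m : ℤ) (k : ℕ) : List ℕ := (List.range k).map fun j => tmZ (m + j)

/-- A (nonempty) word is a factor of the two-sided Thue–Morse sequence. -/
def IsFactor (α : List ℕ) : Prop := α ≠ [] ∧ ∃ m : ℤ, α = tmBlock m α.length

/-- The words `i⁽ⁿ⁾`: `blk i 0 = [i]`, `blk i (n+1) = blk i n ++ blk (1-i) n`. -/
def blk : ℕ → ℕ → List ℕ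
  | i, 0 => [i]
  | i, n + 1 => blk i n ++ blk (1 - i) n

theorem tmBlock_eq (m : ℤ) (k : ℕ) :
    tmBlock m k = (List.range k).map (fun j : ℕ => tmZ (m + (j : ℤ))) := by
  unfold tmBlock
  simp [← List.map_eq_flatMap, Function.comp_def]

theorem tm_lt (n : ℕ) : tm n < 2 := Nat.mod_lt _ (by norm_num)

theorem tm_even (n : ℕ) : tm (2 * n) = tm n := by
  unfold tm
  rcases Nat.eq_zero_or_pos n with h | h
  · subst h; rfl
  · have := Nat.digits_add_two_add_one 0 (2 * n - 1)
    rw [Nat.digits_def' (by norm_num) (by omega : 0 < 2 * n)]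
    simp

theorem tm_odd (n : ℕ) : tm (2 * n + 1) = (tm n + 1) % 2 := by
  unfold tm
  rw [Nat.digits_def' (by norm_num) (by omega : 0 < 2 * n + 1)]
  have h1 : (2 * n + 1) % 2 = 1 := by omega
  have h2 : (2 * n + 1) / 2 = n := by omega
  rw [h1, h2, List.sum_cons]
  omega

theorem tmZ_lt (m : ℤ) : tmZ m < 2 := by
  unfold tmZ; split_ifs <;> exact tm_lt _

theorem tmZ_even (q : ℤ) : tmZ (2 * q) = (tmZ q + if q < 0 then 1 else 0) % 2 := by
  unfold tmZ
  by_cases h : 0 ≤ q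
  · rw [if_pos h, if_pos (by omega), if_neg (by omega)]
    have : (2 * q).toNat = 2 * q.toNat := by omega
    rw [this, tm_even]
    have := tm_lt q.toNat
    omega
  · rw [if_neg h, if_neg (by omega), if_pos (by omega)]
    have : (-(2 * q) - 1).toNat = 2 * (-q - 1).toNat + 1 := by omega
    rw [this, tm_odd]

theorem tmZ_odd (q : ℤ) : tmZ (2 * q + 1) = (tmZ (2 * q) + 1) % 2 := by
  unfold tmZ
  by_cases h : 0 ≤ q
  · rw [if_pos (by omega), if_pos (by omega)]
    have h1 : (2 * q).toNat = 2 * q.toNat := by omega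
    have h2 : (2 * q + 1).toNat = 2 * q.toNat + 1 := by omega
    rw [h1, h2, tm_even, tm_odd]
  · rw [if_neg (by omega), if_neg (by omega)]
    have h1 : (-(2 * q) - 1).toNat = 2 * (-q - 1).toNat + 1 := by omega
    have h2 : (-(2 * q + 1) - 1).toNat = 2 * (-q - 1).toNat := by omega
    rw [h1, h2, tm_even, tm_odd]
    have := tm_lt (-q - 1).toNat
    omega

/-- type of the block `q` at level `n` -/
def btype (n : ℕ) (q : ℤ) : ℕ := (tmZ q + if q < 0 then n else 0) % 2

theorem btype_lt (n : ℕ) (q : ℤ) : btype n q < 2 := Nat.mod_lt _ (by norm_num)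

theorem btype_odd (n : ℕ) (q : ℤ) : btype n (2 * q + 1) = (btype n (2 * q) + 1) % 2 := by
  unfold btype
  rw [tmZ_odd]
  have : (2 * q + 1 < 0) ↔ (2 * q < 0) := by omega
  simp only [this]
  split_ifs <;> omega

theorem tmZ_block (n : ℕ) : ∀ (q : ℤ) (r : ℕ), r < 2 ^ n →
    tmZ (q * 2 ^ n + r) = (btype n q + tm r) % 2 := by
  induction n with
  | zero =>
    intro q r hr
    have : r = 0 := by simpa using hr
    subst this
    have := tmZ_lt q
    simp [btype, tm]
    omega
  | succ n ih =>
    intro q r hr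
    have hr' : r / 2 < 2 ^ n := by rw [pow_succ] at hr; omega
    have key := ih q (r / 2) hr'
    have hsign : (q * 2 ^ n + ((r / 2 : ℕ) : ℤ) < 0) ↔ q < 0 := by
      have h2 : ((r / 2 : ℕ) : ℤ) < 2 ^ n := by exact_mod_cast hr'
      have h3 : (0 : ℤ) ≤ ((r / 2 : ℕ) : ℤ) := by positivity
      have h4 : (0 : ℤ) < 2 ^ n := by positivity
      constructor
      · intro h; by_contra h'; push Not at h'
        have := mul_nonneg h' h4.le
        linarith
      · intro h
        have : q * 2 ^ n ≤ (-1) * 2 ^ n := mul_le_mul_of_nonneg_right (by omega) h4.le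
        linarith
    have hb : btype (n + 1) q = (btype n q + if q < 0 then 1 else 0) % 2 := by
      unfold btype; split_ifs <;> omega
    have hev := tmZ_even (q * 2 ^ n + ((r / 2 : ℕ) : ℤ))
    simp only [hsign] at hev
    rw [hb]
    rcases Nat.mod_two_eq_zero_or_one r with h | h
    · have e1 : q * 2 ^ (n + 1) + (r : ℤ) = 2 * (q * 2 ^ n + ((r / 2 : ℕ) : ℤ)) := by
        have : (r : ℤ) = 2 * ((r / 2 : ℕ) : ℤ) := by omega
        rw [pow_succ]; linarith
      have e2 : tm r = tm (r / 2) := by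
        conv_lhs => rw [show r = 2 * (r / 2) by omega]
        exact tm_even _
      rw [e1, hev, key, e2]
      omega
    · have e1 : q * 2 ^ (n + 1) + (r : ℤ) = 2 * (q * 2 ^ n + ((r / 2 : ℕ) : ℤ)) + 1 := by
        have : (r : ℤ) = 2 * ((r / 2 : ℕ) : ℤ) + 1 := by omega
        rw [pow_succ]; linarith
      have e2 : tm r = (tm (r / 2) + 1) % 2 := by
        conv_lhs => rw [show r = 2 * (r / 2) + 1 by omega]
        exact tm_odd _
      rw [e1, tmZ_odd, hev, key, e2]
      omega

/-! ### occurrence counts -/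

/-- indicator of an occurrence of `α` at `m` -/
noncomputable def occ (α : List ℕ) (m : ℤ) : ℝ := if tmBlock m α.length = α then 1 else 0

/-- number of occurrences starting in `[m, m+N)` -/
noncomputable def cnt (α : List ℕ) (m : ℤ) (N : ℕ) : ℝ := ∑ j ∈ Finset.range N, occ α (m + j)

theorem occ_nonneg (α : List ℕ) (m : ℤ) : 0 ≤ occ α m := by
  unfold occ; split_ifs <;> norm_num

theorem occ_le (α : List ℕ) (m : ℤ) : occ α m ≤ 1 := by
  unfold occ; split_ifs <;> norm_num

theorem cnt_add (α : List ℕ) (m : ℤ) (M N : ℕ) :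
    cnt α m (M + N) = cnt α m M + cnt α (m + M) N := by
  unfold cnt
  rw [Finset.sum_range_add]
  simp [add_assoc]

theorem cnt_same (α : List ℕ) (n : ℕ) (q q' : ℤ) (h : btype n q = btype n q') :
    |cnt α (q * 2 ^ n) (2 ^ n) - cnt α (q' * 2 ^ n) (2 ^ n)| ≤ α.length := by
  unfold cnt
  rw [← Finset.sum_sub_distrib]
  refine (Finset.abs_sum_le_sum_abs _ _).trans ?_
  have : ∀ j ∈ Finset.range (2 ^ n),
      |occ α (q * 2 ^ n + j) - occ α (q' * 2 ^ n + j)| ≤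
        if 2 ^ n - α.length ≤ j then (1 : ℝ) else 0 := by
    intro j hj
    rw [Finset.mem_range] at hj
    split_ifs with hc
    · rw [abs_le]
      have := occ_nonneg α (q * 2 ^ n + j)
      have := occ_nonneg α (q' * 2 ^ n + j)
      have := occ_le α (q * 2 ^ n + j)
      have := occ_le α (q' * 2 ^ n + j)
      constructor <;> linarith
    · have : tmBlock (q * 2 ^ n + j) α.length = tmBlock (q' * 2 ^ n + j) α.length := by
        rw [tmBlock_eq, tmBlock_eq]
        apply List.map_congr_left
        intro i hi
        rw [List.mem_range] at hi
        have e := tmZ_block n q (j + i) (by omega)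
        have e' := tmZ_block n q' (j + i) (by omega)
        push_cast at e e'
        rw [add_assoc, add_assoc, e, e', h]
      unfold occ
      rw [this]; simp
  refine (Finset.sum_le_sum this).trans ?_
  rw [← Finset.sum_filter, Finset.sum_const, nsmul_eq_mul, mul_one]
  have hs : (Finset.range (2 ^ n)).filter (fun j => 2 ^ n - α.length ≤ j) ⊆
      Finset.Ico (2 ^ n - α.length) (2 ^ n) := by
    intro j hj
    simp only [Finset.mem_filter, Finset.mem_range, Finset.mem_Ico] at *
    omega
  have := Finset.card_le_card hs
  rw [Nat.card_Ico] at this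
  have h2 : 2 ^ n - (2 ^ n - α.length) ≤ α.length := by omega
  exact_mod_cast this.trans h2

theorem cnt_split (α : List ℕ) (n : ℕ) (q : ℤ) :
    cnt α (q * 2 ^ (n + 1)) (2 ^ (n + 1)) =
      cnt α ((2 * q) * 2 ^ n) (2 ^ n) + cnt α ((2 * q + 1) * 2 ^ n) (2 ^ n) := by
  have e : 2 ^ (n + 1) = 2 ^ n + 2 ^ n := by rw [pow_succ]; omega
  conv_lhs => rw [e]
  rw [cnt_add]
  congr 2
  · rw [pow_succ]; ring
  · push_cast; rw [pow_succ]; ring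

theorem cnt_any (α : List ℕ) (n : ℕ) (q q' : ℤ) :
    |cnt α (q * 2 ^ (n + 1)) (2 ^ (n + 1)) - cnt α (q' * 2 ^ (n + 1)) (2 ^ (n + 1))|
      ≤ 2 * α.length := by
  rw [cnt_split, cnt_split]
  have o := btype_odd n q
  have o' := btype_odd n q'
  have l := btype_lt n (2 * q)
  have l' := btype_lt n (2 * q')
  by_cases h : btype n (2 * q) = btype n (2 * q')
  · have a := cnt_same α n _ _ h
    have b := cnt_same α n (2 * q + 1) (2 * q' + 1) (by omega)
    rw [abs_le] at *
    constructor <;> linarith [a.1, a.2, b.1, b.2]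
  · have a := cnt_same α n (2 * q) (2 * q' + 1) (by omega)
    have b := cnt_same α n (2 * q + 1) (2 * q') (by omega)
    rw [abs_le] at *
    constructor <;> linarith [a.1, a.2, b.1, b.2]

theorem cnt_shift (α : List ℕ) (m : ℤ) (N r : ℕ) : |cnt α (m + r) N - cnt α m N| ≤ r := by
  induction r with
  | zero => simp
  | succ r ih =>
    have h1 := cnt_add α (m + r) N 1
    have h2 := cnt_add α (m + r) 1 N
    rw [add_comm N 1, h2] at h1
    have e : ∀ x, cnt α x 1 = occ α x := by intro x; simp [cnt]
    rw [e, e] at h1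
    have := occ_nonneg α (m + r)
    have := occ_nonneg α (m + r + N)
    have := occ_le α (m + r)
    have := occ_le α (m + r + N)
    push_cast at h1 ⊢
    rw [← add_assoc]
    rw [abs_le] at *
    constructor <;> linarith [ih.1, ih.2]

theorem cnt_mul (α : List ℕ) (n : ℕ) (q : ℤ) (K : ℕ) :
    |cnt α (q * 2 ^ (n + 1)) (K * 2 ^ (n + 1)) - K * cnt α 0 (2 ^ (n + 1))|
      ≤ K * (2 * α.length) := by
  induction K with
  | zero => simp [cnt]
  | succ K ih =>
    rw [Nat.succ_mul, cnt_add]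
    have a := cnt_any α n (q + K) 0
    have e : q * 2 ^ (n + 1) + ((K * 2 ^ (n + 1) : ℕ) : ℤ) = (q + K) * 2 ^ (n + 1) := by
      push_cast; ring
    rw [e]
    rw [zero_mul] at a
    push_cast
    rw [abs_le] at *
    constructor <;> linarith [a.1, a.2, ih.1, ih.2]

theorem cnt_main (α : List ℕ) (n : ℕ) (m : ℤ) (K : ℕ) :
    |cnt α m (K * 2 ^ (n + 1)) - K * cnt α 0 (2 ^ (n + 1))|
      ≤ K * (2 * α.length) + 2 ^ (n + 1) := by
  have hp : (0 : ℤ) < 2 ^ (n + 1) := by positivity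
  have h0 := Int.emod_nonneg m hp.ne'
  have h1 := Int.emod_lt_of_pos m hp
  have h2 := Int.emod_add_mul_ediv m (2 ^ (n + 1))
  have a := cnt_mul α n (m / 2 ^ (n + 1)) K
  have b := cnt_shift α (m / 2 ^ (n + 1) * 2 ^ (n + 1)) (K * 2 ^ (n + 1)) (m % 2 ^ (n + 1)).toNat
  have e : m / 2 ^ (n + 1) * 2 ^ (n + 1) + (((m % 2 ^ (n + 1)).toNat : ℕ) : ℤ) = m := by
    rw [Int.toNat_of_nonneg h0]; linarith
  rw [e] at b
  have c : (((m % 2 ^ (n + 1)).toNat : ℕ) : ℝ) ≤ 2 ^ (n + 1) := by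
    have : (m % 2 ^ (n + 1)).toNat ≤ 2 ^ (n + 1) := by zify; rw [Int.toNat_of_nonneg h0]; exact h1.le
    exact_mod_cast this
  rw [abs_le] at *
  constructor <;> linarith [a.1, a.2, b.1, b.2]

/-! ### sums over binary words -/

/-- sum of `g` over all binary words of length `L` -/
def sumW : ℕ → (List ℕ → ℝ) → ℝ
  | 0, g => g []
  | L + 1, g => sumW L (fun w => g (0 :: w)) + sumW L (fun w => g (1 :: w))

theorem sumW_add (L : ℕ) : ∀ g h : List ℕ → ℝ,
    sumW L (fun w => g w + h w) = sumW L g + sumW L h := by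
  induction L with
  | zero => intro g h; rfl
  | succ L ih => intro g h; simp only [sumW, ih]; ring

theorem sumW_mul (L : ℕ) (c : ℝ) : ∀ g : List ℕ → ℝ,
    sumW L (fun w => c * g w) = c * sumW L g := by
  induction L with
  | zero => intro g; rfl
  | succ L ih => intro g; simp only [sumW, ih]; ring

theorem sumW_sum (L N : ℕ) (g : ℕ → List ℕ → ℝ) :
    sumW L (fun w => ∑ j ∈ Finset.range N, g j w) = ∑ j ∈ Finset.range N, sumW L (g j) := by
  induction N with
  | zero =>
    have := sumW_mul L 0 (fun _ => 0)
    simpa using this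
  | succ N ih => simp only [Finset.sum_range_succ, sumW_add, ih]

theorem sumW_le (L : ℕ) : ∀ g h : List ℕ → ℝ, (∀ w, w.length = L → g w ≤ h w) →
    sumW L g ≤ sumW L h := by
  induction L with
  | zero => intro g h H; exact H [] rfl
  | succ L ih =>
    intro g h H
    exact add_le_add (ih _ _ fun w hw => H _ (by simp [hw])) (ih _ _ fun w hw => H _ (by simp [hw]))

theorem sumW_congr (L : ℕ) (g h : List ℕ → ℝ) (H : ∀ w, w.length = L → g w = h w) :
    sumW L g = sumW L h :=
  le_antisymm (sumW_le L _ _ fun w hw => (H w hw).le) (sumW_le L _ _ fun w hw => (H w hw).ge)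

theorem sumW_append (a b : ℕ) : ∀ g : List ℕ → ℝ,
    sumW (a + b) g = sumW a (fun x => sumW b (fun y => g (x ++ y))) := by
  induction a with
  | zero => intro g; simp [sumW]
  | succ a ih =>
    intro g
    rw [Nat.succ_add]
    simp only [sumW, ih, List.cons_append]

theorem sumW_single (α : List ℕ) (hα : ∀ x ∈ α, x < 2) : ∀ g : List ℕ → ℝ,
    sumW α.length (fun u => if u = α then g u else 0) = g α := by
  induction α with
  | nil => intro g; simp [sumW]
  | cons a α ih =>
    intro g
    have z : sumW α.length (fun _ => (0 : ℝ)) = 0 := by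
      have := sumW_mul α.length 0 (fun _ => 0)
      simpa using this
    have ha : a < 2 := hα a (by simp)
    have ih' := ih (fun x hx => hα x (by simp [hx]))
    interval_cases a
    · simp [sumW, z, ih' (fun w => g (0 :: w))]
    · simp [sumW, z, ih' (fun w => g (1 :: w))]

section Inv
variable (Φ : List ℕ → ℝ)

theorem sumW_left (hl : ∀ w, Φ w = Φ (0 :: w) + Φ (1 :: w)) (a : ℕ) :
    ∀ u, sumW a (fun x => Φ (x ++ u)) = Φ u := by
  induction a with
  | zero => intro u; rfl
  | succ a ih =>
    intro u
    simp only [sumW, List.cons_append]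
    rw [← sumW_add]
    rw [← ih u]
    congr 1
    funext w
    exact (hl _).symm

theorem sumW_right (hr : ∀ w, Φ w = Φ (w ++ [0]) + Φ (w ++ [1])) (a : ℕ) :
    ∀ u, sumW a (fun y => Φ (u ++ y)) = Φ u := by
  induction a with
  | zero => intro u; simp [sumW]
  | succ a ih =>
    intro u
    have h0 := ih (u ++ [0])
    have h1 := ih (u ++ [1])
    simp only [List.append_assoc, List.singleton_append] at h0 h1
    simp only [sumW]
    rw [h0, h1, ← hr]

theorem sumW_occ (hl : ∀ w, Φ w = Φ (0 :: w) + Φ (1 :: w))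
    (hr : ∀ w, Φ w = Φ (w ++ [0]) + Φ (w ++ [1]))
    (α : List ℕ) (hα : ∀ x ∈ α, x < 2) (L j : ℕ) (hj : j + α.length ≤ L) :
    sumW L (fun w => if (w.drop j).take α.length = α then Φ w else 0) = Φ α := by
  obtain ⟨b, rfl⟩ := Nat.exists_eq_add_of_le hj
  rw [add_assoc, sumW_append]
  rw [← sumW_left Φ hl j α]
  apply sumW_congr
  intro x hx
  rw [sumW_append]
  rw [← sumW_single α hα (fun u => Φ (x ++ u))]
  apply sumW_congr
  intro u hu
  rw [← sumW_right Φ hr b (x ++ u)]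
  have : ∀ y, ((x ++ (u ++ y)).drop j).take α.length = u := by
    intro y
    rw [List.drop_left' hx, List.take_left' hu]
  simp only [this]
  split_ifs with h
  · simp
  · have := sumW_mul b 0 (fun _ => 0)
    simpa using this
end Inv

theorem tmBlock_length (m : ℤ) (k : ℕ) : (tmBlock m k).length = k := by simp [tmBlock]

theorem tmBlock_add (m : ℤ) (a b : ℕ) :
    tmBlock m (a + b) = tmBlock m a ++ tmBlock (m + a) b := by
  simp [tmBlock_eq, List.range_add, add_assoc, Function.comp_def]

theorem tmBlock_sub (m : ℤ) (L j k : ℕ) (h : j + k ≤ L) :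
    ((tmBlock m L).drop j).take k = tmBlock (m + j) k := by
  obtain ⟨b, rfl⟩ := Nat.exists_eq_add_of_le h
  rw [add_assoc, tmBlock_add, tmBlock_add, List.drop_left' (tmBlock_length _ _),
    List.take_left' (tmBlock_length _ _)]

theorem isFactor_sub {u v : List ℕ} (w : List ℕ) (hw : w ≠ []) (h : IsFactor (u ++ w ++ v)) :
    IsFactor w := by
  obtain ⟨-, m, hm⟩ := h
  refine ⟨hw, m + u.length, ?_⟩
  rw [← tmBlock_sub m (u ++ w ++ v).length u.length w.length (by simp), ← hm]
  simp

theorem isFactor_lt {α : List ℕ} (h : IsFactor α) : ∀ x ∈ α, x < 2 := by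
  obtain ⟨-, m, hm⟩ := h
  intro x hx
  rw [hm] at hx
  simp only [tmBlock, List.mem_map] at hx
  obtain ⟨j, -, rfl⟩ := hx
  exact tmZ_lt _

theorem isFactor_zero : IsFactor [0] := ⟨by simp, 0, by simp [tmBlock, tmZ, tm]⟩
theorem isFactor_one : IsFactor [1] := ⟨by simp, 1, by simp [tmBlock, tmZ, tm]⟩

open Classical in
/-- extension of `ψ` to all words -/
noncomputable def ext0 (ψ : List ℕ → ℝ) (w : List ℕ) : ℝ :=
  if w = [] then 1 else if IsFactor w then ψ w else 0

open Classical in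
theorem psi_bound (ψ : List ℕ → ℝ)
    (hpos : ∀ α : List ℕ, IsFactor α → 0 < ψ α)
    (hone : ψ [0] + ψ [1] = 1)
    (hleft : ∀ α : List ℕ, IsFactor α →
      ψ α = (if IsFactor (0 :: α) then ψ (0 :: α) else 0) +
            (if IsFactor (1 :: α) then ψ (1 :: α) else 0))
    (hright : ∀ α : List ℕ, IsFactor α →
      ψ α = (if IsFactor (α ++ [0]) then ψ (α ++ [0]) else 0) +
            (if IsFactor (α ++ [1]) then ψ (α ++ [1]) else 0))
    (α : List ℕ) (hα : IsFactor α) (N : ℕ) (X E : ℝ)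
    (hX : ∀ m, |cnt α m N - X| ≤ E) : |N * ψ α - X| ≤ E := by
  have hl : ∀ w, ext0 ψ w = ext0 ψ (0 :: w) + ext0 ψ (1 :: w) := by
    intro w
    by_cases hw : w = []
    · subst hw; simp [ext0, isFactor_zero, isFactor_one, hone]
    by_cases hf : IsFactor w
    · simp only [ext0, hw, hf, if_true, if_false, reduceCtorEq]
      exact hleft w hf
    · have h0 : ¬ IsFactor (0 :: w) := fun h => hf (isFactor_sub (u := [0]) (v := []) w hw (by simpa using h))
      have h1 : ¬ IsFactor (1 :: w) := fun h => hf (isFactor_sub (u := [1]) (v := []) w hw (by simpa using h))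
      simp [ext0, hw, hf, h0, h1]
  have hr : ∀ w, ext0 ψ w = ext0 ψ (w ++ [0]) + ext0 ψ (w ++ [1]) := by
    intro w
    by_cases hw : w = []
    · subst hw; simp [ext0, isFactor_zero, isFactor_one, hone]
    by_cases hf : IsFactor w
    · have := hright w hf
      simpa [ext0, hw, hf] using this
    · have h0 : ¬ IsFactor (w ++ [0]) := fun h => hf (isFactor_sub (u := []) (v := [0]) w hw (by simpa using h))
      have h1 : ¬ IsFactor (w ++ [1]) := fun h => hf (isFactor_sub (u := []) (v := [1]) w hw (by simpa using h))
      simp [ext0, hw, hf, h0, h1]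
  have hn : ∀ w, 0 ≤ ext0 ψ w := by
    intro w
    unfold ext0
    split_ifs with h1 h2
    · norm_num
    · exact (hpos w h2).le
    · exact le_rfl
  have hα0 : ext0 ψ α = ψ α := by simp [ext0, hα, hα.1]
  set L := N + α.length with hL
  have tot : sumW L (ext0 ψ) = 1 := by
    have := sumW_left (ext0 ψ) hl L []
    simp only [List.append_nil] at this
    rw [show ext0 ψ [] = 1 by simp [ext0]] at this
    exact this
  have main : sumW L (fun w => ∑ j ∈ Finset.range N,
      if (w.drop j).take α.length = α then ext0 ψ w else 0) = N * ψ α := by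
    rw [sumW_sum, Finset.sum_congr rfl (fun j hj => sumW_occ (ext0 ψ) hl hr α (isFactor_lt hα) L j
      (by rw [Finset.mem_range] at hj; omega))]
    simp [hα0]
  have hLpos : 0 < L := by
    have := List.length_pos_iff.mpr hα.1
    omega
  have pt : ∀ w : List ℕ, w.length = L → ∃ c : ℝ, |c - X| ≤ E ∧ (∑ j ∈ Finset.range N,
      if (w.drop j).take α.length = α then ext0 ψ w else 0) = c * ext0 ψ w := by
    intro w hw
    have hw0 : w ≠ [] := by rintro rfl; simp at hw; omega
    by_cases hf : IsFactor w
    · obtain ⟨-, m, hm⟩ := hf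
      refine ⟨cnt α m N, hX m, ?_⟩
      unfold cnt
      rw [Finset.sum_mul]
      apply Finset.sum_congr rfl
      intro j hj
      rw [Finset.mem_range] at hj
      have : (w.drop j).take α.length = tmBlock (m + j) α.length := by
        rw [hm, hw]; exact tmBlock_sub _ _ _ _ (by omega)
      rw [this]
      unfold occ
      split_ifs <;> simp
    · refine ⟨cnt α 0 N, hX 0, ?_⟩
      simp [ext0, hw0, hf]
  have up : N * ψ α ≤ (X + E) * sumW L (ext0 ψ) := by
    rw [← main, ← sumW_mul]
    apply sumW_le
    intro w hw
    obtain ⟨c, hc, e⟩ := pt w hw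
    rw [e]
    rw [abs_le] at hc
    exact mul_le_mul_of_nonneg_right (by linarith [hc.2]) (hn w)
  have lo : (X - E) * sumW L (ext0 ψ) ≤ N * ψ α := by
    rw [← main, ← sumW_mul]
    apply sumW_le
    intro w hw
    obtain ⟨c, hc, e⟩ := pt w hw
    rw [e]
    rw [abs_le] at hc
    exact mul_le_mul_of_nonneg_right (by linarith [hc.1]) (hn w)
  rw [tot] at up lo
  rw [abs_le]
  constructor <;> linarith

open Classical in
/-- There is at most one strictly positive function on the factors of the two-sided
Thue–Morse sequence which is normalized on one-letter factors and additive under one-letter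
extensions on both sides. -/
theorem invariant_function_unique (ψ ψ' : List ℕ → ℝ)
    (hpos : ∀ α : List ℕ, IsFactor α → 0 < ψ α)
    (hone : ψ [0] + ψ [1] = 1)
    (hleft : ∀ α : List ℕ, IsFactor α →
      ψ α = (if IsFactor (0 :: α) then ψ (0 :: α) else 0) +
            (if IsFactor (1 :: α) then ψ (1 :: α) else 0))
    (hright : ∀ α : List ℕ, IsFactor α →
      ψ α = (if IsFactor (α ++ [0]) then ψ (α ++ [0]) else 0) +
            (if IsFactor (α ++ [1]) then ψ (α ++ [1]) else 0))
    (hpos' : ∀ α : List ℕ, IsFactor α → 0 < ψ' α)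
    (hone' : ψ' [0] + ψ' [1] = 1)
    (hleft' : ∀ α : List ℕ, IsFactor α →
      ψ' α = (if IsFactor (0 :: α) then ψ' (0 :: α) else 0) +
             (if IsFactor (1 :: α) then ψ' (1 :: α) else 0))
    (hright' : ∀ α : List ℕ, IsFactor α →
      ψ' α = (if IsFactor (α ++ [0]) then ψ' (α ++ [0]) else 0) +
             (if IsFactor (α ++ [1]) then ψ' (α ++ [1]) else 0)) :
    ∀ α : List ℕ, IsFactor α → ψ α = ψ' α := by

  intro α hα
  have key : ∀ n : ℕ, |ψ α - ψ' α| ≤ (4 * α.length + 2) * (1 / 2) ^ n := by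
    intro n
    have h := cnt_main α n
    have a := psi_bound ψ hpos hone hleft hright α hα _ _ _ (fun m => h m (2 ^ (n + 1)))
    have b := psi_bound ψ' hpos' hone' hleft' hright' α hα _ _ _ (fun m => h m (2 ^ (n + 1)))
    push_cast at a b
    have hp : (0 : ℝ) < 2 ^ (n + 1) := by positivity
    have c : 2 ^ (n + 1) * (2 ^ (n + 1) * |ψ α - ψ' α|) ≤
        2 ^ (n + 1) * ((4 * α.length + 2 : ℝ)) := by
      rw [← abs_of_pos hp, ← mul_assoc, ← abs_mul, ← abs_mul, abs_of_pos hp]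
      rw [abs_le] at *
      constructor <;> linarith [a.1, a.2, b.1, b.2]
    have d := le_of_mul_le_mul_left c hp
    have e : (2 : ℝ) ^ n * |ψ α - ψ' α| ≤ 4 * α.length + 2 := by
      refine le_trans (mul_le_mul_of_nonneg_right ?_ (abs_nonneg _)) d
      exact pow_le_pow_right₀ (by norm_num) (by omega)
    rw [one_div, inv_pow, ← div_eq_mul_inv, le_div_iff₀ (by positivity)]
    linarith
  have lim : Filter.Tendsto (fun n : ℕ => (4 * (α.length : ℝ) + 2) * (1 / 2) ^ n)
      Filter.atTop (nhds ((4 * (α.length : ℝ) + 2) * 0)) :=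
    (tendsto_pow_atTop_nhds_zero_of_lt_one (by norm_num) (by norm_num)).const_mul _
  have := ge_of_tendsto' lim key
  rw [mul_zero] at this
  exact sub_eq_zero.mp (abs_eq_zero.mp (le_antisymm this (abs_nonneg _)))
end

section
/- Let t ∈ ℝ and let (x_n)_{n≥0}, (y_n)_{n≥0} be sequences of real numbers with x_0 = t, y_0 = 1/2 − t, and, for all n ≥ 0, x_n = y_{n+1} and y_n = 2·x_{n+1} + x_n. Then for every n ≥ 0, x_n = (1/3)·( (1/2)^{n+1} + (3t − 1/2)·(−1)^n ) and y_n = (1/3)·( (1/2)^{n} − (3t − 1/2)·(−1)^n ). Consequently, if x_n > 0 and y_n > 0 for all n ≥ 0, then t = 1/6, and x_n = 1/(6·2^n), y_n = 1/(3·2^n) for all n ≥ 0. -/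
/-- Explicit solution of the recursion `x₀ = t`, `y₀ = 1/2 − t`, `xₙ = yₙ₊₁`,
`yₙ = 2xₙ₊₁ + xₙ`, and the consequence of strict positivity: `t = 1/6`,
`xₙ = 1/(6·2ⁿ)`, `yₙ = 1/(3·2ⁿ)`. -/
theorem trace_recursion_solution (t : ℝ) (x y : ℕ → ℝ)
    (hx0 : x 0 = t) (hy0 : y 0 = 1 / 2 - t)
    (hxy : ∀ n : ℕ, x n = y (n + 1))
    (hyx : ∀ n : ℕ, y n = 2 * x (n + 1) + x n) :
    (∀ n : ℕ,
      x n = (1 / 3) * ((1 / 2) ^ (n + 1) + (3 * t - 1 / 2) * (-1 : ℝ) ^ n) ∧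
      y n = (1 / 3) * ((1 / 2) ^ n - (3 * t - 1 / 2) * (-1 : ℝ) ^ n)) ∧
    ((∀ n : ℕ, 0 < x n ∧ 0 < y n) →
      t = 1 / 6 ∧ ∀ n : ℕ, x n = 1 / (6 * 2 ^ n) ∧ y n = 1 / (3 * 2 ^ n)) := by
  have key : ∀ n : ℕ,
      x n = (1 / 3) * ((1 / 2) ^ (n + 1) + (3 * t - 1 / 2) * (-1 : ℝ) ^ n) ∧
      y n = (1 / 3) * ((1 / 2) ^ n - (3 * t - 1 / 2) * (-1 : ℝ) ^ n) := by
    intro n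
    induction n with
    | zero =>
      rw [hx0, hy0]
      constructor <;> ring
    | succ k ih =>
      obtain ⟨h1, h2⟩ := ih
      have h3 := hyx k
      have h4 := hxy k
      constructor
      · have h5 : x (k + 1) = (y k - x k) / 2 := by linarith
        rw [h5, h1, h2]
        ring
      · rw [← h4, h1]
        ring
  refine ⟨key, fun hpos => ?_⟩
  have ht : t = 1 / 6 := by
    by_contra hne
    have hc : 0 < |3 * t - 1 / 2| := by
      rw [abs_pos]
      intro h
      apply hne
      linarith
    obtain ⟨n, hn⟩ := exists_pow_lt_of_lt_one hc (by norm_num : (1 / 2 : ℝ) < 1)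
    obtain ⟨h1, h2⟩ := key n
    obtain ⟨p1, p2⟩ := hpos n
    rw [h1] at p1
    rw [h2] at p2
    have hp : (0 : ℝ) < (1 / 2) ^ n := by positivity
    rw [pow_succ] at p1
    have hb : |(3 * t - 1 / 2) * (-1 : ℝ) ^ n| < (1 / 2) ^ n := by
      rw [abs_lt]
      constructor <;> linarith
    rw [abs_mul, abs_pow, abs_neg, abs_one, one_pow, mul_one] at hb
    linarith
  refine ⟨ht, fun n => ?_⟩
  obtain ⟨h1, h2⟩ := key n
  rw [h1, h2, ht]
  constructor
  · rw [pow_succ, one_div_pow]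
    field_simp
    norm_num
  · rw [one_div_pow]
    field_simp
    norm_num
end
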